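/- If the energy distance E(P,Q) = 2E‖X-Y‖ - E‖X-X'‖ - E‖Y-Y'‖ is zero for probability measures P, Q on ℝ^d with finite first moments (with X,X' ~ P, Y,Y' ~ Q mutually independent), then P = Q. -/

import Mathlib

open MeasureTheory

/-- The energy distance `E(P,Q) = 2E‖X-Y‖ - E‖X-X'‖ - E‖Y-Y'‖` of two probability measures
on `ℝ^d`, with expectations over independent samples written as iterated integrals. -/
noncomputable def energyDist {d : ℕ} (P Q : Measure (EuclideanSpace ℝ (Fin d))) : ℝ :=
  2 * ∫ x, ∫ y, ‖x - y‖ ∂Q ∂P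
    - ∫ x, ∫ x', ‖x - x'‖ ∂P ∂P
    - ∫ y, ∫ y', ‖y - y'‖ ∂Q ∂Q

/-!
The integral `∫ (1 - cos ⟪z, t⟫) / ‖t‖ ^ (d + 1) dt` over a `d`-dimensional Euclidean space
converges, is invariant under isometries and is homogeneous of degree one in `z`, so it equals
`c * ‖z‖`. Inserting this formula for the three norms in the energy distance and exchanging the
integrals gives the identity of Székely and Rizzo
`c * E(P, Q) = ∫ ‖charFun P t - charFun Q t‖ ^ 2 / ‖t‖ ^ (d + 1) dt`.
If the left side vanishes, the two continuous characteristic functions agree almost everywhere,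
hence everywhere.
-/

open Complex Module Set
open scoped ComplexConjugate RealInnerProductSpace

section Kernel

variable {E : Type*} [NormedAddCommGroup E] [InnerProductSpace ℝ E]

/-- The Székely–Rizzo kernel, whose integral over `t` is a constant multiple of `‖z‖`: the
exponent `finrank ℝ E + 1` makes that integral homogeneous of degree one in `z`. At `t = 0`
the division gives the value `0`. -/
noncomputable def energyKernel (z t : E) : ℝ :=
  (1 - Real.cos ⟪z, t⟫) / ‖t‖ ^ (finrank ℝ E + 1)

lemma energyKernel_nonneg (z t : E) : 0 ≤ energyKernel z t :=
  div_nonneg (sub_nonneg.2 (Real.cos_le_one _)) (by positivity)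

@[simp]
lemma energyKernel_zero_left (t : E) : energyKernel 0 t = 0 := by
  simp [energyKernel]

lemma energyKernel_smul_left {r : ℝ} (hr : r ≠ 0) (z t : E) :
    energyKernel (r • z) t = |r| ^ (finrank ℝ E + 1) * energyKernel z (r • t) := by
  simp only [energyKernel, real_inner_smul_left, real_inner_smul_right, norm_smul,
    Real.norm_eq_abs, mul_pow]
  have abs_r_pow_ne_zero : |r| ^ (finrank ℝ E + 1) ≠ 0 := pow_ne_zero _ (abs_ne_zero.2 hr)
  field_simp

lemma energyKernel_map_linearIsometryEquiv (L : E ≃ₗᵢ[ℝ] E) (z t : E) :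
    energyKernel (L z) (L t) = energyKernel z t := by
  simp [energyKernel]

lemma one_sub_cos_inner_le (z t : E) :
    1 - Real.cos ⟪z, t⟫ ≤ (2 + ‖z‖ ^ 2 / 2) * (‖t‖ ^ 2 / (1 + ‖t‖ ^ 2)) := by
  have le_two : 1 - Real.cos ⟪z, t⟫ ≤ 2 := by linarith [Real.neg_one_le_cos ⟪z, t⟫]
  have le_sq : 1 - Real.cos ⟪z, t⟫ ≤ ‖z‖ ^ 2 / 2 * ‖t‖ ^ 2 := by
    have inner_sq_le : ⟪z, t⟫ ^ 2 ≤ (‖z‖ * ‖t‖) ^ 2 :=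
      sq_le_sq.2 ((abs_real_inner_le_norm z t).trans (le_abs_self _))
    linarith [Real.one_sub_sq_div_two_le_cos (x := ⟪z, t⟫), mul_pow ‖z‖ ‖t‖ 2]
  rw [← mul_div_assoc, le_div_iff₀ (by positivity)]
  linarith [mul_le_mul_of_nonneg_right le_two (sq_nonneg ‖t‖)]

lemma measurable_energyKernel [MeasurableSpace E] [OpensMeasurableSpace E]
    [SecondCountableTopology E] : Measurable (Function.uncurry (energyKernel (E := E))) := by
  unfold Function.uncurry energyKernel
  fun_prop

variable [FiniteDimensional ℝ E] [MeasurableSpace E] [BorelSpace E]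

lemma integrable_sq_div_one_add_sq_div_pow_finrank_add_one [Nontrivial E] :
    Integrable fun t : E => ‖t‖ ^ 2 / (1 + ‖t‖ ^ 2) / ‖t‖ ^ (finrank ℝ E + 1) := by
  refine (integrable_fun_norm_addHaar (volume : Measure E)
    (f := fun r : ℝ => r ^ 2 / (1 + r ^ 2) / r ^ (finrank ℝ E + 1))).2 ?_
  refine (integrableOn_congr_fun (fun r hr => ?_) measurableSet_Ioi).1
    integrable_inv_one_add_sq.integrableOn
  have r_ne_zero : r ≠ 0 := (mem_Ioi.1 hr).ne'
  obtain ⟨n, hn⟩ : ∃ n, finrank ℝ E = n + 1 := Nat.exists_eq_add_one.2 finrank_pos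
  simp only [hn, add_tsub_cancel_right, smul_eq_mul]
  field_simp
  ring

lemma integrable_energyKernel (z : E) : Integrable (energyKernel z) := by
  rcases subsingleton_or_nontrivial E with _ | _
  · simp [Subsingleton.elim z 0, funext energyKernel_zero_left]
  refine (integrable_sq_div_one_add_sq_div_pow_finrank_add_one.const_mul (2 + ‖z‖ ^ 2 / 2)).mono'
    measurable_energyKernel.of_uncurry_left.aestronglyMeasurable (ae_of_all _ fun t => ?_)
  rw [Real.norm_of_nonneg (energyKernel_nonneg z t), ← mul_div_assoc]
  exact div_le_div_of_nonneg_right (one_sub_cos_inner_le z t) (by positivity)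

lemma integral_energyKernel_smul_left (r : ℝ) (z : E) :
    ∫ t, energyKernel (r • z) t = |r| * ∫ t, energyKernel z t := by
  rcases eq_or_ne r 0 with rfl | hr
  · simp
  simp_rw [energyKernel_smul_left hr, integral_const_mul,
    Measure.integral_comp_smul volume (energyKernel z) r, smul_eq_mul, abs_inv, abs_pow]
  field_simp
  ring

lemma integral_energyKernel_eq_of_norm_eq {z w : E} (h : ‖z‖ = ‖w‖) :
    ∫ t, energyKernel z t = ∫ t, energyKernel w t := by
  let L : E ≃ₗᵢ[ℝ] E := (ℝ ∙ (z - w))ᗮ.reflection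
  have L_apply : L z = w := Submodule.reflection_sub h
  calc ∫ t, energyKernel z t = ∫ t, energyKernel (L z) (L t) := by
        simp_rw [energyKernel_map_linearIsometryEquiv]
    _ = ∫ t, energyKernel w t := by
        rw [L_apply]
        exact L.measurePreserving.integral_comp' (f := L.toMeasurableEquiv) (energyKernel w)

variable (E) in
lemma exists_forall_integral_energyKernel_eq_mul_norm :
    ∃ c : ℝ, ∀ z : E, ∫ t, energyKernel z t = c * ‖z‖ := by
  rcases subsingleton_or_nontrivial E with _ | _
  · exact ⟨0, fun z => by simp [Subsingleton.elim z 0]⟩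
  obtain ⟨e, he⟩ := exists_norm_eq E zero_le_one
  refine ⟨∫ t, energyKernel e t, fun z => ?_⟩
  calc ∫ t, energyKernel z t = ∫ t, energyKernel (‖z‖ • e) t :=
        integral_energyKernel_eq_of_norm_eq (by simp [norm_smul, he])
    _ = (∫ t, energyKernel e t) * ‖z‖ := by
        rw [integral_energyKernel_smul_left, abs_norm, mul_comm]

lemma integrable_energyKernel_prod {Ω : Type*} [MeasurableSpace Ω] {m : Measure Ω} [SFinite m]
    {X : Ω → E} (hX : Integrable X m) :
    Integrable (fun p : Ω × E => energyKernel (X p.1) p.2) (m.prod volume) := by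
  obtain ⟨c, hc⟩ := exists_forall_integral_energyKernel_eq_mul_norm E
  have meas : AEStronglyMeasurable (fun p : Ω × E => energyKernel (X p.1) p.2)
      (m.prod volume) :=
    (measurable_energyKernel.comp_aemeasurable
      (hX.aemeasurable.comp_fst.prodMk measurable_snd.aemeasurable)).aestronglyMeasurable
  refine (integrable_prod_iff meas).2 ⟨ae_of_all _ fun ω => integrable_energyKernel (X ω), ?_⟩
  simp_rw [Real.norm_of_nonneg (energyKernel_nonneg _ _), hc]
  exact hX.norm.const_mul c

lemma integral_integral_energyKernel {Ω : Type*} [MeasurableSpace Ω] {m : Measure Ω} [SFinite m]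
    {X : Ω → E} (hX : Integrable X m) {c : ℝ}
    (hc : ∀ z : E, ∫ t, energyKernel z t = c * ‖z‖) :
    ∫ t, ∫ ω, energyKernel (X ω) t ∂m = c * ∫ ω, ‖X ω‖ ∂m := by
  rw [← integral_integral_swap (integrable_energyKernel_prod hX)]
  simp_rw [hc, integral_const_mul]

end Kernel

section CharFun

variable {E : Type*} [NormedAddCommGroup E] [InnerProductSpace ℝ E] [MeasurableSpace E]

lemma charFun_mul_conj_charFun (μ ν : Measure E) [SFinite μ] [SFinite ν] (t : E) :
    charFun μ t * conj (charFun ν t) = ∫ p, cexp (⟪p.1 - p.2, t⟫ * I) ∂(μ.prod ν) := by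
  rw [← charFun_neg, charFun_apply, charFun_apply, ← integral_prod_mul]
  congr with p
  rw [← Complex.exp_add, inner_sub_left, inner_neg_right]
  push_cast
  ring_nf

variable [OpensMeasurableSpace E] [SecondCountableTopology E]
  (μ ν : Measure E) [IsFiniteMeasure μ] [IsFiniteMeasure ν]

lemma integral_cos_inner_sub (t : E) :
    ∫ p, Real.cos ⟪p.1 - p.2, t⟫ ∂(μ.prod ν) = (charFun μ t * conj (charFun ν t)).re := by
  have integrable_cexp : Integrable (fun p : E × E => cexp (⟪p.1 - p.2, t⟫ * I)) (μ.prod ν) :=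
    .of_bound (by fun_prop) 1 (ae_of_all _ fun p => (norm_exp_ofReal_mul_I _).le)
  rw [charFun_mul_conj_charFun]
  simpa [exp_ofReal_mul_I_re] using integral_re integrable_cexp

lemma integral_energyKernel_sub (t : E) :
    ∫ p, energyKernel (p.1 - p.2) t ∂(μ.prod ν) =
      (μ.real univ * ν.real univ - (charFun μ t * conj (charFun ν t)).re) /
        ‖t‖ ^ (finrank ℝ E + 1) := by
  have integrable_cos : Integrable (fun p : E × E => Real.cos ⟪p.1 - p.2, t⟫) (μ.prod ν) :=
    .of_bound (by fun_prop) 1 (ae_of_all _ fun p => Real.abs_cos_le_one _)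
  simp only [energyKernel]
  rw [integral_div, integral_sub (integrable_const 1) integrable_cos,
    integral_cos_inner_sub, integral_const, ← univ_prod_univ, measureReal_prod_prod, smul_eq_mul,
    mul_one]

end CharFun

lemma integrable_fst_sub_snd {E : Type*} [NormedAddCommGroup E] [MeasurableSpace E]
    [OpensMeasurableSpace E] [SecondCountableTopology E] {μ ν : Measure E} [IsFiniteMeasure μ]
    [IsFiniteMeasure ν] (hμ : Integrable (fun x => ‖x‖) μ) (hν : Integrable (fun y => ‖y‖) ν) :
    Integrable (fun p : E × E => p.1 - p.2) (μ.prod ν) :=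
  (((integrable_norm_iff aestronglyMeasurable_id).1 hμ).comp_fst ν).sub
    (((integrable_norm_iff aestronglyMeasurable_id).1 hν).comp_snd μ)

section EnergyDistance

variable {E : Type*} [NormedAddCommGroup E] [InnerProductSpace ℝ E] [FiniteDimensional ℝ E]
  [MeasurableSpace E] [BorelSpace E] {P Q : Measure E} [IsFiniteMeasure P] [IsFiniteMeasure Q]

lemma two_mul_integral_energyKernel_sub_sub (h_mass : P.real univ = Q.real univ) (t : E) :
    2 * ∫ p, energyKernel (p.1 - p.2) t ∂(P.prod Q)
        - ∫ p, energyKernel (p.1 - p.2) t ∂(P.prod P)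
        - ∫ p, energyKernel (p.1 - p.2) t ∂(Q.prod Q) =
      normSq (charFun P t - charFun Q t) / ‖t‖ ^ (finrank ℝ E + 1) := by
  simp only [integral_energyKernel_sub, normSq_sub, mul_conj, ofReal_re, h_mass]
  ring

lemma integrable_integral_energyKernel_sub (hP : Integrable (fun x => ‖x‖) P)
    (hQ : Integrable (fun y => ‖y‖) Q) :
    Integrable fun t : E => ∫ p, energyKernel (p.1 - p.2) t ∂(P.prod Q) :=
  (integrable_energyKernel_prod (integrable_fst_sub_snd hP hQ)).integral_prod_right

lemma integral_integral_energyKernel_sub (hP : Integrable (fun x => ‖x‖) P)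
    (hQ : Integrable (fun y => ‖y‖) Q) {c : ℝ}
    (hc : ∀ z : E, ∫ t, energyKernel z t = c * ‖z‖) :
    ∫ t, ∫ p, energyKernel (p.1 - p.2) t ∂(P.prod Q) = c * ∫ x, ∫ y, ‖x - y‖ ∂Q ∂P := by
  have integrable_sub := integrable_fst_sub_snd hP hQ
  rw [integral_integral_energyKernel integrable_sub hc, integral_prod _ integrable_sub.norm]

lemma integrable_normSq_charFun_sub_div (h_mass : P.real univ = Q.real univ)
    (hP : Integrable (fun x => ‖x‖) P) (hQ : Integrable (fun y => ‖y‖) Q) :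
    Integrable fun t : E => normSq (charFun P t - charFun Q t) / ‖t‖ ^ (finrank ℝ E + 1) := by
  simp_rw [← two_mul_integral_energyKernel_sub_sub h_mass]
  exact (((integrable_integral_energyKernel_sub hP hQ).const_mul 2).sub
    (integrable_integral_energyKernel_sub hP hP)).sub (integrable_integral_energyKernel_sub hQ hQ)

lemma integral_normSq_charFun_sub_div (h_mass : P.real univ = Q.real univ)
    (hP : Integrable (fun x => ‖x‖) P) (hQ : Integrable (fun y => ‖y‖) Q) {c : ℝ}
    (hc : ∀ z : E, ∫ t, energyKernel z t = c * ‖z‖) :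
    ∫ t : E, normSq (charFun P t - charFun Q t) / ‖t‖ ^ (finrank ℝ E + 1) =
      c * (2 * ∫ x, ∫ y, ‖x - y‖ ∂Q ∂P
        - ∫ x, ∫ x', ‖x - x'‖ ∂P ∂P
        - ∫ y, ∫ y', ‖y - y'‖ ∂Q ∂Q) := by
  have integrable_PQ := (integrable_integral_energyKernel_sub hP hQ).const_mul 2
  have integrable_PP := integrable_integral_energyKernel_sub hP hP
  have integrable_QQ := integrable_integral_energyKernel_sub hQ hQ
  have integrable_PQ_sub_PP : Integrable fun t : E =>
      2 * ∫ p, energyKernel (p.1 - p.2) t ∂(P.prod Q)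
        - ∫ p, energyKernel (p.1 - p.2) t ∂(P.prod P) := integrable_PQ.sub integrable_PP
  simp_rw [← two_mul_integral_energyKernel_sub_sub h_mass]
  rw [integral_sub integrable_PQ_sub_PP integrable_QQ,
    integral_sub integrable_PQ integrable_PP, integral_const_mul,
    integral_integral_energyKernel_sub hP hQ hc, integral_integral_energyKernel_sub hP hP hc,
    integral_integral_energyKernel_sub hQ hQ hc]
  ring

theorem energyDist_eq_zero_imp_eq_general (h_mass : P.real univ = Q.real univ)
    (hP : Integrable (fun x => ‖x‖) P) (hQ : Integrable (fun y => ‖y‖) Q)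
    (h : 2 * ∫ x, ∫ y, ‖x - y‖ ∂Q ∂P
      - ∫ x, ∫ x', ‖x - x'‖ ∂P ∂P
      - ∫ y, ∫ y', ‖y - y'‖ ∂Q ∂Q = 0) :
    P = Q := by
  obtain ⟨c, hc⟩ := exists_forall_integral_energyKernel_eq_mul_norm E
  have integral_eq_zero :
      ∫ t : E, normSq (charFun P t - charFun Q t) / ‖t‖ ^ (finrank ℝ E + 1) = 0 := by
    rw [integral_normSq_charFun_sub_div h_mass hP hQ hc, h, mul_zero]
  rw [integral_eq_zero_iff_of_nonneg (fun t => div_nonneg (normSq_nonneg _) (by positivity))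
    (integrable_normSq_charFun_sub_div h_mass hP hQ)] at integral_eq_zero
  refine Measure.ext_of_charFun
    ((Continuous.ae_eq_iff_eq volume continuous_charFun continuous_charFun).1 ?_)
  filter_upwards [integral_eq_zero] with t ht
  rcases eq_or_ne t 0 with rfl | t_ne_zero
  · rw [charFun_zero, charFun_zero, h_mass]
  · simpa [t_ne_zero, sub_eq_zero] using ht

end EnergyDistance

/-- Identifiability: if the energy distance between two probability measures on ℝ^d with
finite first moments is zero, then the measures coincide. -/
theorem energyDist_eq_zero_imp_eq {d : ℕ} (P Q : Measure (EuclideanSpace ℝ (Fin d)))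
    [IsProbabilityMeasure P] [IsProbabilityMeasure Q]
    (hP : Integrable (fun x => ‖x‖) P) (hQ : Integrable (fun y => ‖y‖) Q)
    (h : energyDist P Q = 0) :
    P = Q :=
  energyDist_eq_zero_imp_eq_general (by simp) hP hQ h
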